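/- Let ψ be a Ma-Minda function. Let h be analytic on 𝔻 with h(0) = 0 and h'(0) ≠ 0, satisfying Re(1 + z·h''(z)/h'(z)) > −1/2 for all z ∈ 𝔻, and suppose the function z ↦ (1/z)∫₀^z h(t) dt (with value 0 at z = 0) is subordinate to (ψ(z) − 1)/ψ(z). If f ∈ 𝒜 satisfies f(z) ≠ 0 for z ∈ 𝔻\{0}, f'(z) ≠ 0 for z ∈ 𝔻, and f(z)f''(z)/f'(z)² ≺ h(z), then f ∈ S*(ψ). -/

import Mathlib

open Complex Metric Set

noncomputable section

/-- The open unit disk in `ℂ`. -/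
def 𝔻 : Set ℂ := Metric.ball 0 1

/-- The class `𝒜` of analytic functions on `𝔻` normalized by `f 0 = 0`, `f' 0 = 1`. -/
def IsClassA (f : ℂ → ℂ) : Prop :=
  DifferentiableOn ℂ f 𝔻 ∧ f 0 = 0 ∧ deriv f 0 = 1

/-- `g` is subordinate to `F` on the unit disk. -/
def Subordinate (g F : ℂ → ℂ) : Prop :=
  ∃ ω : ℂ → ℂ, DifferentiableOn ℂ ω 𝔻 ∧ ω 0 = 0 ∧ (∀ z ∈ 𝔻, ω z ∈ 𝔻) ∧
    ∀ z ∈ 𝔻, g z = F (ω z)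

/-- `ψ` is a Ma-Minda function: analytic and univalent on `𝔻`, `Re ψ > 0`, `ψ 0 = 1`,
`ψ' 0 > 0`, with real Taylor coefficients (expressed via `ψ (conj z) = conj (ψ z)`). -/
def MaMinda (ψ : ℂ → ℂ) : Prop :=
  DifferentiableOn ℂ ψ 𝔻 ∧ Set.InjOn ψ 𝔻 ∧ (∀ z ∈ 𝔻, 0 < (ψ z).re) ∧
    ψ 0 = 1 ∧ 0 < (deriv ψ 0).re ∧ (deriv ψ 0).im = 0 ∧
    (∀ z ∈ 𝔻, ψ (starRingEnd ℂ z) = starRingEnd ℂ (ψ z))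

/-- The Ma-Minda starlike class `S*(ψ)`. -/
def StarlikeMM (ψ f : ℂ → ℂ) : Prop :=
  IsClassA f ∧ (∀ z ∈ 𝔻, z ≠ 0 → f z ≠ 0) ∧
    Subordinate (fun z => if z = 0 then 1 else z * deriv f z / f z) ψ

/-- The Ma-Minda convex class `C(ψ)`. -/
def ConvexMM (ψ f : ℂ → ℂ) : Prop :=
  IsClassA f ∧ (∀ z ∈ 𝔻, deriv f z ≠ 0) ∧
    Subordinate (fun z => 1 + z * deriv (deriv f) z / deriv f z) ψ

/-- `f` is starlike of order `α`. -/
def StarlikeOrder (α : ℝ) (f : ℂ → ℂ) : Prop :=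
  IsClassA f ∧ (∀ z ∈ 𝔻, z ≠ 0 → f z ≠ 0) ∧
    ∀ z ∈ 𝔻, z ≠ 0 → α < (z * deriv f z / f z).re

/-- `f` is a (normalized) convex function on `𝔻`. -/
def IsConvexFn (f : ℂ → ℂ) : Prop :=
  IsClassA f ∧ (∀ z ∈ 𝔻, deriv f z ≠ 0) ∧
    ∀ z ∈ 𝔻, 0 < (1 + z * deriv (deriv f) z / deriv f z).re

/-!
Put `q(z) = 1 - f(z) / (z f'(z))` and `Q(z) = z⁻¹ ∫₀^z h`. Then `q + z q' = f f'' / f'²` and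
`Q + z Q' = h`, so the hypothesis on `f` reads `q + z q' ≺ Q + z Q'`.

The bound `Re (1 + z h''/h') > -1/2` makes `Q` convex: `W` given by
`1 + z Q''/Q' = (1 + W) / (1 - W)` satisfies `z W' = (1 - W) (1 + z h''/h') - (1 + W)`, and Jack's
lemma shows that `|W|` cannot reach `1`. For a convex map `Q` the differential subordination gives
`q ≺ Q` (Hallenbeck and Ruscheweyh). Indeed, if `q` first left `Q(|z| < ρ)` at `z₀`, with
`q(z₀) = Q(w₀)`, Jack's lemma applied to `Q⁻¹ ∘ q` would give `z₀ q'(z₀) = k w₀ Q'(w₀)` with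
`k ≥ 1`, whereas for a convex map `Q(w₀) + k w₀ Q'(w₀)` is never a value of `Q + z Q'` on
`|z| < |w₀|`.

Hence `q ≺ Q ≺ 1 - 1/ψ`, that is, `z f'/f ≺ ψ`.
-/

open Filter Topology

lemma isOpen_unitDisk : IsOpen 𝔻 := isOpen_ball

lemma mem_unitDisk {z : ℂ} : z ∈ 𝔻 ↔ ‖z‖ < 1 := mem_ball_zero_iff

lemma zero_mem_unitDisk : (0 : ℂ) ∈ 𝔻 := mem_ball_self one_pos

lemma unitDisk_mem_nhds {z : ℂ} (hz : z ∈ 𝔻) : 𝔻 ∈ 𝓝 z := isOpen_unitDisk.mem_nhds hz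

lemma closedBall_subset_unitDisk {r : ℝ} (hr : r < 1) : closedBall 0 r ⊆ 𝔻 :=
  closedBall_subset_ball hr

lemma ofReal_mul_mem_unitDisk {z : ℂ} (hz : z ∈ 𝔻) {t : ℝ} (ht : t ∈ Icc (0 : ℝ) 1) :
    (t : ℂ) * z ∈ 𝔻 := by
  rw [mem_unitDisk, norm_mul, Complex.norm_of_nonneg ht.1]
  exact (mul_le_of_le_one_left (norm_nonneg z) ht.2).trans_lt (mem_unitDisk.1 hz)

lemma inner_eq_norm_sq_mul_re_div (a b : ℂ) : inner ℝ a b = ‖a‖ ^ 2 * (b / a).re := by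
  rcases eq_or_ne a 0 with rfl | ha
  · simp
  · have hb : b * starRingEnd ℂ a = ((‖a‖ ^ 2 : ℝ) : ℂ) * (b / a) := by
      rw [ofReal_pow, ← conj_mul']
      field_simp
    rw [Complex.inner, hb, re_ofReal_mul]

lemma re_inv_pos {z : ℂ} (hz : 0 < z.re) : 0 < z⁻¹.re := by
  rw [inv_re]
  exact div_pos hz (normSq_pos.2 (ne_zero_of_re_pos hz))

lemma hasDerivAt_comp_ofReal_mul {u : ℂ → ℂ} {u' z : ℂ} {t : ℝ}
    (hu : HasDerivAt u u' (t * z)) : HasDerivAt (fun s : ℝ => u (s * z)) (u' * z) t :=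
  (hu.comp (t : ℂ) (hasDerivAt_mul_const z)).comp_ofReal

lemma re_pos_of_frontier {F : ℂ → ℂ} {U : Set ℂ} (hUb : Bornology.IsBounded U) (hUo : IsOpen U)
    (hUc : IsPreconnected U) (hF : DiffContOnCl ℂ F U) (hnonneg : ∀ z ∈ frontier U, 0 ≤ (F z).re)
    (hpos : ∃ z ∈ frontier U, 0 < (F z).re) {z : ℂ} (hz : z ∈ U) : 0 < (F z).re := by
  set E : ℂ → ℂ := fun z => exp (-F z)
  have hE : DiffContOnCl ℂ E U := differentiable_exp.comp_diffContOnCl hF.neg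
  have norm_E : ∀ z, ‖E z‖ = Real.exp (-(F z).re) := fun z => by rw [norm_exp, neg_re]
  have hE_le : ∀ y ∈ closure U, ‖E y‖ ≤ 1 := fun y hy =>
    norm_le_of_forall_mem_frontier_norm_le hUb hE
      (fun x hx => by simpa [norm_E] using hnonneg x hx) hy
  by_contra! hle
  have hmax : IsMaxOn (norm ∘ E) U z := fun y hy =>
    (hE_le y (subset_closure hy)).trans (by simpa [norm_E] using hle)
  obtain ⟨x, hx, hxpos⟩ := hpos
  have hconst : ‖E x‖ = ‖E z‖ := congrArg norm
    (eqOn_closure_of_isPreconnected_of_isMaxOn_norm hUc hUo hE hz hmax (frontier_subset_closure hx))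
  rw [norm_E, norm_E, Real.exp_eq_exp] at hconst
  linarith

lemma re_pos_of_norm_eq {F : ℂ → ℂ} {w : ℂ} (hF : DifferentiableOn ℂ F (closedBall 0 ‖w‖))
    (hnonneg : ∀ z, ‖z‖ = ‖w‖ → 0 ≤ (F z).re) (hpos : ∃ z, ‖z‖ = ‖w‖ ∧ 0 < (F z).re)
    {z : ℂ} (hz : ‖z‖ < ‖w‖) : 0 < (F z).re := by
  have hw : ‖w‖ ≠ 0 := ((norm_nonneg z).trans_lt hz).ne'
  have hfr : ∀ z : ℂ, z ∈ frontier (ball 0 ‖w‖) ↔ ‖z‖ = ‖w‖ := fun z => by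
    rw [frontier_ball _ hw, mem_sphere_zero_iff_norm]
  refine re_pos_of_frontier isBounded_ball isOpen_ball (convex_ball 0 ‖w‖).isPreconnected
    (DifferentiableOn.diffContOnCl ?_) ?_ ?_ (mem_ball_zero_iff.2 hz)
  · rwa [closure_ball _ hw]
  · simpa only [hfr] using hnonneg
  · simpa only [hfr] using hpos

lemma mapsTo_ball_of_mapsTo_closure {E F : Type*} [NormedAddCommGroup E] [NormedSpace ℝ E]
    [ProperSpace E] [TopologicalSpace F] {f : E → F} {S : Set F} {R : ℝ}
    (hf : ContinuousOn f (ball 0 R)) (hS : IsOpen S) (h0 : f 0 ∈ S)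
    (hstep : ∀ z ∈ ball 0 R, MapsTo f (closedBall 0 ‖z‖) (closure S) → f z ∈ S) :
    MapsTo f (ball 0 R) S := by
  intro b hb
  by_contra hbS
  have hsub : ∀ z : E, ‖z‖ ≤ ‖b‖ → closedBall 0 ‖z‖ ⊆ ball (0 : E) R := fun z hz =>
    closedBall_subset_ball (hz.trans_lt (mem_ball_zero_iff.1 hb))
  have hcompact : IsCompact (closedBall 0 ‖b‖ ∩ f ⁻¹' Sᶜ) :=
    (isCompact_closedBall 0 ‖b‖).of_isClosed_subset
      ((hf.mono (hsub b le_rfl)).preimage_isClosed_of_isClosed isClosed_closedBall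
        hS.isClosed_compl) inter_subset_left
  obtain ⟨z, ⟨hzb, hzS⟩, hmin⟩ := hcompact.exists_isMinOn ⟨b, by simp, hbS⟩
    continuous_norm.continuousOn
  have hzb : ‖z‖ ≤ ‖b‖ := mem_closedBall_zero_iff.1 hzb
  have hz0 : ‖z‖ ≠ 0 := fun h => hzS (norm_eq_zero.1 h ▸ h0)
  have hball : MapsTo f (ball 0 ‖z‖) S := by
    intro y hy
    by_contra hyS
    have hyz : ‖y‖ < ‖z‖ := mem_ball_zero_iff.1 hy
    exact hyz.not_ge (hmin ⟨mem_closedBall_zero_iff.2 (hyz.le.trans hzb), hyS⟩)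
  refine hzS (hstep z (hsub z hzb (by simp)) ?_)
  rw [← closure_ball _ hz0]
  refine hball.closure_of_continuousOn (hf.mono ?_)
  rw [closure_ball _ hz0]
  exact hsub z hzb

/-! ### Jack's lemma -/

lemma mul_deriv_div_im_eq_zero_of_norm_le {w : ℂ → ℂ} {z₀ : ℂ} (hd : DifferentiableAt ℂ w z₀)
    (hw : w z₀ ≠ 0) (hmax : ∀ z, ‖z‖ = ‖z₀‖ → ‖w z‖ ≤ ‖w z₀‖) :
    (z₀ * deriv w z₀ / w z₀).im = 0 := by
  let γ : ℝ → ℂ := fun θ => exp (θ * I) * z₀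
  have hγ0 : γ 0 = z₀ := by simp [γ]
  have hγ : HasDerivAt γ (I * z₀) 0 := by
    simpa [γ] using (((hasDerivAt_mul_const I).cexp.mul_const z₀).comp_ofReal (z := 0))
  have hwγ : HasDerivAt (fun θ => ‖w (γ θ)‖ ^ 2)
      (2 * inner ℝ (w z₀) (deriv w z₀ * (I * z₀))) 0 := by
    simpa [hγ0] using ((hγ0 ▸ hd.hasDerivAt : HasDerivAt w _ (γ 0)).comp 0 hγ).norm_sq
  have hlocal : IsLocalMax (fun θ => ‖w (γ θ)‖ ^ 2) 0 := .of_forall fun θ => by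
    have hθ : ‖γ θ‖ = ‖z₀‖ := by simp [γ, norm_exp_ofReal_mul_I]
    simpa only [hγ0] using pow_le_pow_left₀ (norm_nonneg _) (hmax _ hθ) 2
  have hzero := hlocal.hasDerivAt_eq_zero hwγ
  have hrot : deriv w z₀ * (I * z₀) / w z₀ = z₀ * deriv w z₀ / w z₀ * I := by ring
  rw [inner_eq_norm_sq_mul_re_div, hrot, mul_I_re] at hzero
  simpa [hw] using hzero

lemma nonneg_of_hasDerivAt_of_eventually_le_left {φ : ℝ → ℝ} {φ' a : ℝ} (hφ : HasDerivAt φ φ' a)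
    (hle : ∀ᶠ t in 𝓝[<] a, φ t ≤ φ a) : 0 ≤ φ' := by
  have hslope := (hasDerivWithinAt_iff_tendsto_slope' self_notMem_Iio).1
    (hφ.hasDerivWithinAt (s := Iio a))
  refine ge_of_tendsto hslope ?_
  filter_upwards [hle, self_mem_nhdsWithin] with t ht hta
  rw [slope_def_field]
  exact div_nonneg_of_nonpos (sub_nonpos.2 ht) (sub_nonpos.2 (mem_Iio.1 hta).le)

lemma one_le_re_mul_deriv_div {w : ℂ → ℂ} {z₀ : ℂ} (hd : DifferentiableAt ℂ w z₀)
    (hw : w z₀ ≠ 0) (hle : ∀ t ∈ Ioo (0 : ℝ) 1, ‖w (t * z₀)‖ ≤ t * ‖w z₀‖) :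
    1 ≤ (z₀ * deriv w z₀ / w z₀).re := by
  have hray : HasDerivAt (fun t : ℝ => w (t * z₀)) (deriv w z₀ * z₀) 1 :=
    hasDerivAt_comp_ofReal_mul (by simpa using hd.hasDerivAt)
  have hφ : HasDerivAt (fun t : ℝ => ‖w (t * z₀)‖ ^ 2 - t ^ 2 * ‖w z₀‖ ^ 2)
      (2 * (‖w z₀‖ ^ 2 * ((z₀ * deriv w z₀ / w z₀).re - 1))) 1 := by
    refine (hray.norm_sq.sub ((hasDerivAt_pow 2 1).mul_const _)).congr_deriv ?_
    rw [ofReal_one, one_mul, inner_eq_norm_sq_mul_re_div, mul_comm (deriv w z₀)]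
    ring
  have hderiv := nonneg_of_hasDerivAt_of_eventually_le_left hφ (by
    filter_upwards [Ioo_mem_nhdsLT one_pos] with t ht
    have hsq := pow_le_pow_left₀ (norm_nonneg _) (hle t ht) 2
    rw [mul_pow] at hsq
    simpa using hsq)
  have hwpos : 0 < ‖w z₀‖ ^ 2 := by positivity
  exact sub_nonneg.1 ((mul_nonneg_iff_of_pos_left hwpos).1
    ((mul_nonneg_iff_of_pos_left two_pos).1 hderiv))

theorem jack {w : ℂ → ℂ} {z₀ : ℂ} (hd : DifferentiableOn ℂ w (ball 0 ‖z₀‖))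
    (hd₀ : DifferentiableAt ℂ w z₀) (h0 : w 0 = 0) (hw : w z₀ ≠ 0)
    (hmax : ∀ z, ‖z‖ ≤ ‖z₀‖ → ‖w z‖ ≤ ‖w z₀‖) :
    ∃ k : ℝ, 1 ≤ k ∧ z₀ * deriv w z₀ = k * w z₀ := by
  have hz₀ : 0 < ‖z₀‖ := norm_pos_iff.2 (by rintro rfl; exact hw h0)
  refine ⟨(z₀ * deriv w z₀ / w z₀).re, one_le_re_mul_deriv_div hd₀ hw fun t ht => ?_, ?_⟩
  · have htz : ‖(t : ℂ) * z₀‖ = t * ‖z₀‖ := by rw [norm_mul, Complex.norm_of_nonneg ht.1.le]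
    have hmem : (t : ℂ) * z₀ ∈ ball 0 ‖z₀‖ := by
      rw [mem_ball_zero_iff, htz]
      exact mul_lt_of_lt_one_left hz₀ ht.2
    have hmaps : MapsTo w (ball 0 ‖z₀‖) (closedBall (w 0) ‖w z₀‖) := fun z hz => by
      simpa [h0] using hmax z (mem_ball_zero_iff.1 hz).le
    have hschwarz := dist_le_div_mul_dist_of_mapsTo_ball hd hmaps hmem
    rw [h0, dist_zero_right, dist_zero_right, htz] at hschwarz
    exact hschwarz.trans_eq (by field_simp)
  · have him := mul_deriv_div_im_eq_zero_of_norm_le hd₀ hw fun z hz => hmax z hz.le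
    have hreal : ((z₀ * deriv w z₀ / w z₀).re : ℂ) = z₀ * deriv w z₀ / w z₀ :=
      Complex.ext (ofReal_re _) ((ofReal_im _).trans him.symm)
    rw [hreal, div_mul_cancel₀ _ hw]

lemma norm_lt_one_of_mul_deriv_ne {w : ℂ → ℂ} (hw : DifferentiableOn ℂ w 𝔻) (h0 : w 0 = 0)
    (hne : ∀ z ∈ 𝔻, ‖w z‖ = 1 → ∀ k : ℝ, 1 ≤ k → z * deriv w z ≠ k * w z) {z : ℂ} (hz : z ∈ 𝔻) :
    ‖w z‖ < 1 := by
  have hmaps : MapsTo w 𝔻 (ball 0 1) := by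
    refine mapsTo_ball_of_mapsTo_closure hw.continuousOn isOpen_ball (by simp [h0])
      fun z₀ hz₀ hcl => mem_ball_zero_iff.2 ?_
    have hle : ∀ z, ‖z‖ ≤ ‖z₀‖ → ‖w z‖ ≤ 1 := fun z hz => by
      simpa using closure_ball_subset_closedBall (hcl (mem_closedBall_zero_iff.2 hz))
    refine (hle z₀ le_rfl).lt_of_ne fun h1 => ?_
    obtain ⟨k, hk, hkw⟩ := jack
      (hw.mono (ball_subset_ball (mem_unitDisk.1 hz₀).le))
      (hw.differentiableAt (unitDisk_mem_nhds hz₀)) h0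
      (norm_ne_zero_iff.1 (h1 ▸ one_ne_zero)) (fun z hz => (hle z hz).trans_eq h1.symm)
    exact hne z₀ hz₀ h1 k hk hkw
  exact mem_ball_zero_iff.1 (hmaps hz)

lemma monotoneOn_norm_of_re_mul_deriv_div_nonneg {v : ℂ → ℂ} (hv : DifferentiableOn ℂ v 𝔻)
    (hre : ∀ z ∈ 𝔻, 0 ≤ (z * deriv v z / v z).re) {z : ℂ} (hz : z ∈ 𝔻) :
    MonotoneOn (fun t : ℝ => ‖v (t * z)‖ ^ 2) (Icc 0 1) := by
  have hderiv : ∀ t ∈ Icc (0 : ℝ) 1, HasDerivAt (fun t : ℝ => ‖v (t * z)‖ ^ 2)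
      (2 * (‖v (t * z)‖ ^ 2 * (z * deriv v (t * z) / v (t * z)).re)) t := fun t ht => by
    have hray := hasDerivAt_comp_ofReal_mul
      (hv.differentiableAt (unitDisk_mem_nhds (ofReal_mul_mem_unitDisk hz ht))).hasDerivAt
    simpa only [inner_eq_norm_sq_mul_re_div, mul_comm z] using hray.norm_sq
  refine monotoneOn_of_hasDerivWithinAt_nonneg (convex_Icc 0 1)
    (fun t ht => (hderiv t ht).continuousAt.continuousWithinAt)
    (fun t ht => (hderiv t (interior_subset ht)).hasDerivWithinAt) fun t ht => ?_
  rw [interior_Icc] at ht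
  have hscale := hre _ (ofReal_mul_mem_unitDisk hz (Ioo_subset_Icc_self ht))
  rw [mul_assoc, mul_div_assoc, re_ofReal_mul] at hscale
  have := nonneg_of_mul_nonneg_right hscale ht.1
  positivity

lemma ne_zero_of_le_re_mul_deriv_div {u : ℂ → ℂ} {n : ℕ} (hu : DifferentiableOn ℂ u 𝔻)
    (hu0 : u 0 ≠ 0) (hre : ∀ z ∈ 𝔻, -(n : ℝ) ≤ (z * deriv u z / u z).re) {z : ℂ} (hz : z ∈ 𝔻) :
    u z ≠ 0 := by
  set v : ℂ → ℂ := fun y => y ^ n * u y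
  have hre_v : ∀ x ∈ 𝔻, 0 ≤ (x * deriv v x / v x).re := by
    intro x hx
    rcases eq_or_ne x 0 with rfl | hx0
    · simp
    by_cases hux : u x = 0
    · simp [v, hux]
    have hlog : logDeriv v x = n / x + logDeriv u x :=
      (logDeriv_mul (f := (· ^ n)) x (pow_ne_zero n hx0) hux (differentiableAt_pow n)
        (hu.differentiableAt (unitDisk_mem_nhds hx))).trans (by rw [logDeriv_pow])
    rw [mul_div_assoc, ← logDeriv_apply, hlog, mul_add, mul_div_cancel₀ _ hx0, logDeriv_apply,
      ← mul_div_assoc, add_re, natCast_re]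
    linarith [hre x hx]
  have hmono := monotoneOn_norm_of_re_mul_deriv_div_nonneg (v := v)
    ((differentiableOn_pow n).mul hu) hre_v hz
  have hu_ray : ContinuousAt (fun t : ℝ => u (t * z)) 0 := by
    refine ContinuousAt.comp (g := u) ?_ (by fun_prop)
    simpa using (hu.differentiableAt (unitDisk_mem_nhds zero_mem_unitDisk)).continuousAt
  have hne : ∀ᶠ t : ℝ in 𝓝[>] 0, u (t * z) ≠ 0 :=
    (hu_ray.eventually_ne (by simpa using hu0)).filter_mono nhdsWithin_le_nhds
  obtain ⟨t, hut, ht⟩ := (hne.and (Ioo_mem_nhdsGT one_pos)).exists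
  intro huz
  have hz0 : z ≠ 0 := by rintro rfl; exact hu0 huz
  have hvz : v z = 0 := by simp [v, huz]
  have hle : ‖v (t * z)‖ ^ 2 ≤ 0 := by
    simpa [hvz] using hmono (Ioo_subset_Icc_self ht) (right_mem_Icc.2 zero_le_one) ht.2.le
  have hvt : v (t * z) ≠ 0 :=
    mul_ne_zero (pow_ne_zero n (mul_ne_zero (ofReal_ne_zero.2 ht.1.ne') hz0)) hut
  exact hle.not_gt (by positivity)

/-! ### Convex maps of the disk -/

/-- The quantity `1 + z Q''/Q'` of a map `Q`. Its real part is the rate at which the tangent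
direction of the image of the circle `|z| = r` turns as `arg z` increases. -/
def turningRate (Q : ℂ → ℂ) (z : ℂ) : ℂ := 1 + z * deriv (deriv Q) z / deriv Q z

/-- The integral of `turningRate Q` along the arc `r e^{iτ}`, `α ≤ τ ≤ θ`. Its real part is the
angle through which the tangent direction of the image curve turns on this arc. -/
def turning (Q : ℂ → ℂ) (r α θ : ℝ) : ℂ := ∫ τ in α..θ, turningRate Q (circleMap 0 r τ)

/-- Locally univalent analytic maps of the disk: the maps for which `turningRate` is analytic. -/
structure IsLocallyUnivalent (Q : ℂ → ℂ) : Prop where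
  differentiableOn : DifferentiableOn ℂ Q 𝔻
  deriv_ne_zero : ∀ z ∈ 𝔻, deriv Q z ≠ 0

/-- Convex maps of the disk: the functions of `IsConvexFn` freed from the normalization
`Q 0 = 0`, `Q' 0 = 1`. -/
structure IsConvexMap (Q : ℂ → ℂ) : Prop extends IsLocallyUnivalent Q where
  re_turningRate_pos : ∀ z ∈ 𝔻, 0 < (turningRate Q z).re

lemma pos_of_hasDerivAt_mul_sin {u ρ a : ℝ → ℝ} {α β θ : ℝ}
    (hu : ∀ τ, HasDerivAt u (ρ τ * Real.sin (a τ)) τ) (hρ : ∀ τ, 0 < ρ τ) (ha : StrictMono a)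
    (haα : a α = 0) (haβ : a β = 2 * Real.pi) (huα : 0 ≤ u α) (huβ : 0 ≤ u β)
    (hθ : θ ∈ Ioo α β) : 0 < u θ := by
  have hcont : Continuous u := continuous_iff_continuousAt.2 fun τ => (hu τ).continuousAt
  rcases le_or_gt (a θ) Real.pi with hπ | hπ
  · have hmono : StrictMonoOn u (Icc α θ) := by
      refine strictMonoOn_of_deriv_pos (convex_Icc α θ) hcont.continuousOn fun τ hτ => ?_
      rw [interior_Icc] at hτ
      rw [(hu τ).deriv]
      have hsin : 0 < Real.sin (a τ) :=
        Real.sin_pos_of_pos_of_lt_pi (haα ▸ ha hτ.1) ((ha hτ.2).trans_le hπ)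
      exact mul_pos (hρ τ) hsin
    exact huα.trans_lt (hmono (left_mem_Icc.2 hθ.1.le) (right_mem_Icc.2 hθ.1.le) hθ.1)
  · have hanti : StrictAntiOn u (Icc θ β) := by
      refine strictAntiOn_of_deriv_neg (convex_Icc θ β) hcont.continuousOn fun τ hτ => ?_
      rw [interior_Icc] at hτ
      rw [(hu τ).deriv]
      have hsin : Real.sin (a τ) < 0 := by
        rw [← Real.sin_sub_two_pi]
        exact Real.sin_neg_of_neg_of_neg_pi_lt (by linarith [ha hτ.2]) (by linarith [ha hτ.1])
      exact mul_neg_of_pos_of_neg (hρ τ) hsin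
    exact huβ.trans_lt (hanti (left_mem_Icc.2 hθ.2.le) (right_mem_Icc.2 hθ.2.le) hθ.2)

lemma circleMap_mem_unitDisk {r : ℝ} (hr : |r| < 1) (θ : ℝ) : circleMap 0 r θ ∈ 𝔻 := by
  rwa [mem_unitDisk, norm_circleMap_zero]

lemma exists_circleMap_eq_of_norm_eq {ω w : ℂ} (hn : ‖ω‖ = ‖w‖) (hne : ω ≠ w) :
    ∃ α, circleMap 0 ‖w‖ α = w ∧
      ∃ θ ∈ Ioo α (α + 2 * Real.pi), circleMap 0 ‖w‖ θ = ω := by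
  have hrange : ∀ z : ℂ, ‖z‖ = ‖w‖ → z ∈ range (circleMap 0 ‖w‖) := fun z hz => by
    rw [range_circleMap, abs_norm, mem_sphere_zero_iff_norm, hz]
  obtain ⟨α, hα⟩ := hrange w rfl
  obtain ⟨θ', hθ'⟩ := hrange ω hn
  obtain ⟨θ, hθ, hθθ'⟩ := (periodic_circleMap 0 ‖w‖).exists_mem_Ioc Real.two_pi_pos θ' α
  have hθω : circleMap 0 ‖w‖ θ = ω := hθθ'.symm.trans hθ'
  refine ⟨α, hα, θ, ⟨hθ.1, hθ.2.lt_of_ne ?_⟩, hθω⟩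
  rintro rfl
  exact hne (by rw [← hθω, periodic_circleMap, hα])

namespace IsLocallyUnivalent

variable {Q : ℂ → ℂ}

lemma differentiableOn_deriv (hQ : IsLocallyUnivalent Q) : DifferentiableOn ℂ (deriv Q) 𝔻 :=
  hQ.differentiableOn.deriv isOpen_unitDisk

lemma differentiableOn_turningRate (hQ : IsLocallyUnivalent Q) :
    DifferentiableOn ℂ (turningRate Q) 𝔻 :=
  ((differentiableOn_id.mul (hQ.differentiableOn_deriv.deriv isOpen_unitDisk)).div
    hQ.differentiableOn_deriv hQ.deriv_ne_zero).const_add 1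

lemma hasDerivAt_mul_deriv (hQ : IsLocallyUnivalent Q) {z : ℂ} (hz : z ∈ 𝔻) :
    HasDerivAt (fun z => z * deriv Q z) (turningRate Q z * deriv Q z) z := by
  refine ((hasDerivAt_id z).mul (hQ.differentiableOn_deriv.differentiableAt
    (unitDisk_mem_nhds hz)).hasDerivAt).congr_deriv ?_
  have := hQ.deriv_ne_zero z hz
  simp only [turningRate, id]
  field_simp

lemma hasDerivAt_turning (hQ : IsLocallyUnivalent Q) {r : ℝ} (hr : |r| < 1) (α θ : ℝ) :
    HasDerivAt (turning Q r α) (turningRate Q (circleMap 0 r θ)) θ := by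
  have hcont : Continuous fun τ => turningRate Q (circleMap 0 r τ) :=
    hQ.differentiableOn_turningRate.continuousOn.comp_continuous (continuous_circleMap 0 r)
      (circleMap_mem_unitDisk hr)
  exact (hcont.integral_hasStrictDerivAt α θ).hasDerivAt

lemma turning_add_two_pi (hQ : IsLocallyUnivalent Q) {r : ℝ} (hr : |r| < 1) (α : ℝ) :
    turning Q r α (α + 2 * Real.pi) = (2 * Real.pi : ℝ) := by
  have hmean : Real.circleAverage (turningRate Q) 0 r = turningRate Q 0 :=
    (hQ.differentiableOn_turningRate.mono (closure_ball_subset_closedBall.trans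
      (closedBall_subset_unitDisk hr))).diffContOnCl.circleAverage
  rw [Real.circleAverage, inv_smul_eq_iff₀ Real.two_pi_pos.ne'] at hmean
  have hper : Function.Periodic (fun τ => turningRate Q (circleMap 0 r τ)) (2 * Real.pi) :=
    (periodic_circleMap 0 r).comp (turningRate Q)
  have hshift := hper.intervalIntegral_add_eq α 0
  rw [zero_add, hmean] at hshift
  rw [turning, hshift]
  simp [turningRate]

lemma mul_deriv_circleMap (hQ : IsLocallyUnivalent Q) {r : ℝ} (hr : |r| < 1) (α θ : ℝ) :
    circleMap 0 r θ * deriv Q (circleMap 0 r θ) =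
      circleMap 0 r α * deriv Q (circleMap 0 r α) * exp (I * turning Q r α θ) := by
  set K : ℂ → ℂ := fun z => z * deriv Q z
  set A : ℝ → ℂ := turning Q r α
  have hderiv : ∀ θ, HasDerivAt (fun θ => K (circleMap 0 r θ) * exp (-(I * A θ))) 0 θ := by
    intro θ
    have hK := (hQ.hasDerivAt_mul_deriv (circleMap_mem_unitDisk hr θ)).comp_of_eq θ
      (hasDerivAt_circleMap 0 r θ) rfl
    have hA := ((hQ.hasDerivAt_turning hr α θ).const_mul I).neg.cexp
    refine (hK.mul hA).congr_deriv ?_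
    simp only [Function.comp]
    ring
  have hconst : K (circleMap 0 r θ) * exp (-(I * A θ)) = K (circleMap 0 r α) := by
    rw [is_const_of_deriv_eq_zero (fun θ => (hderiv θ).differentiableAt)
      (fun θ => (hderiv θ).deriv) θ α]
    simp [A, turning]
  change K (circleMap 0 r θ) = K (circleMap 0 r α) * exp (I * A θ)
  rw [← hconst, mul_assoc, ← exp_add, neg_add_cancel, exp_zero, mul_one]

lemma hasDerivAt_re_sub_circleMap_div (hQ : IsLocallyUnivalent Q) {r : ℝ} (hr : |r| < 1)
    (hr0 : r ≠ 0) (α θ : ℝ) :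
    HasDerivAt (fun θ => ((Q (circleMap 0 r α) - Q (circleMap 0 r θ)) /
        (circleMap 0 r α * deriv Q (circleMap 0 r α))).re)
      (Real.exp (-(turning Q r α θ).im) * Real.sin (turning Q r α θ).re) θ := by
  set K : ℂ := circleMap 0 r α * deriv Q (circleMap 0 r α)
  have hK : K ≠ 0 := mul_ne_zero (circleMap_ne_center hr0)
    (hQ.deriv_ne_zero _ (circleMap_mem_unitDisk hr α))
  have hQθ := (hQ.differentiableOn.differentiableAt (unitDisk_mem_nhds
    (circleMap_mem_unitDisk hr θ))).hasDerivAt.comp_of_eq θ (hasDerivAt_circleMap 0 r θ) rfl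
  have htangent : -(deriv Q (circleMap 0 r θ) * (circleMap 0 r θ * I)) / K =
      -(exp (I * turning Q r α θ) * I) := by
    rw [← mul_assoc, mul_comm (deriv Q _), hQ.mul_deriv_circleMap hr α θ]
    change -(K * exp (I * turning Q r α θ) * I) / K = _
    field_simp
  refine (reCLM.hasFDerivAt.comp_hasDerivAt θ
    ((hQθ.const_sub (Q (circleMap 0 r α))).div_const K)).congr_deriv ?_
  rw [htangent]
  simp [exp_im]

lemma dslope_ne_zero (hQ : IsLocallyUnivalent Q) (hinj : InjOn Q 𝔻) {w z : ℂ} (hw : w ∈ 𝔻)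
    (hz : z ∈ 𝔻) : dslope Q w z ≠ 0 := by
  rcases eq_or_ne z w with rfl | hzw
  · rw [dslope_same]
    exact hQ.deriv_ne_zero z hz
  · rw [dslope_of_ne _ hzw, slope_def_field]
    exact div_ne_zero (sub_ne_zero.2 (hinj.ne hz hw hzw)) (sub_ne_zero.2 hzw)

end IsLocallyUnivalent

namespace IsConvexMap

variable {Q : ℂ → ℂ}

lemma strictMono_re_turning (hQ : IsConvexMap Q) {r : ℝ} (hr : |r| < 1) (α : ℝ) :
    StrictMono fun θ => (turning Q r α θ).re := by
  have hderiv : ∀ θ, HasDerivAt (fun θ => (turning Q r α θ).re)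
      (turningRate Q (circleMap 0 r θ)).re θ := fun θ =>
    reCLM.hasFDerivAt.comp_hasDerivAt θ (hQ.hasDerivAt_turning hr α θ)
  refine strictMono_of_deriv_pos fun θ => ?_
  rw [(hderiv θ).deriv]
  exact hQ.re_turningRate_pos _ (circleMap_mem_unitDisk hr θ)

-- Around the circle the tangent angle increases from `0` to `2π`, so the left side, whose
-- derivative has the sign of the sine of that angle, first increases from `0` and then decreases
-- back to `0`.
lemma re_sub_div_pos_of_norm_eq (hQ : IsConvexMap Q) {w ω : ℂ} (hw : w ∈ 𝔻) (hn : ‖ω‖ = ‖w‖)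
    (hne : ω ≠ w) : 0 < ((Q w - Q ω) / (w * deriv Q w)).re := by
  have hr : |‖w‖| < 1 := by rwa [abs_norm, ← mem_unitDisk]
  have hr0 : ‖w‖ ≠ 0 := fun h => hne (by rw [norm_eq_zero.1 h, norm_eq_zero.1 (hn.trans h)])
  obtain ⟨α, hα, θ, hθ, hθω⟩ := exists_circleMap_eq_of_norm_eq hn hne
  have hpos := pos_of_hasDerivAt_mul_sin (hQ.hasDerivAt_re_sub_circleMap_div hr hr0 α)
    (fun _ => Real.exp_pos _) (hQ.strictMono_re_turning hr α) (by simp [turning])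
    (by simp only [hQ.turning_add_two_pi hr, ofReal_re]) (by simp)
    (by simp [periodic_circleMap 0 ‖w‖ α]) hθ
  rwa [hα, hθω] at hpos

lemma re_sub_div_pos (hQ : IsConvexMap Q) {w ω : ℂ} (hw : w ∈ 𝔻) (hn : ‖ω‖ ≤ ‖w‖) (hne : ω ≠ w) :
    0 < ((Q w - Q ω) / (w * deriv Q w)).re := by
  rcases hn.eq_or_lt with hn | hn
  · exact hQ.re_sub_div_pos_of_norm_eq hw hn hne
  have hw0 : w ≠ 0 := norm_pos_iff.1 ((norm_nonneg ω).trans_lt hn)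
  refine re_pos_of_norm_eq (F := fun z => (Q w - Q z) / (w * deriv Q w))
    (((hQ.differentiableOn.mono (closedBall_subset_unitDisk (mem_unitDisk.1 hw))).const_sub
      _).div_const _) (fun z hz => ?_) ⟨-w, norm_neg w, ?_⟩ hn
  · rcases eq_or_ne z w with rfl | hzw
    · simp
    · exact (hQ.re_sub_div_pos_of_norm_eq hw hz hzw).le
  · exact hQ.re_sub_div_pos_of_norm_eq hw (norm_neg w) (neg_ne_self.2 hw0)

lemma injOn (hQ : IsConvexMap Q) : InjOn Q 𝔻 := by
  have hne : ∀ w ∈ 𝔻, ∀ ω, ‖ω‖ ≤ ‖w‖ → ω ≠ w → Q w ≠ Q ω := fun w hw ω hn hωw heq => by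
    simpa [heq] using hQ.re_sub_div_pos hw hn hωw
  intro x hx y hy hxy
  by_contra hxy'
  rcases le_total ‖x‖ ‖y‖ with hn | hn
  · exact hne y hy x hn hxy' hxy.symm
  · exact hne x hx y hn (Ne.symm hxy') hxy

lemma re_mul_deriv_sub_div_pos_of_norm_eq (hQ : IsConvexMap Q) {w ω : ℂ} (hw : w ∈ 𝔻)
    (hn : ‖ω‖ = ‖w‖) (hne : ω ≠ w) :
    0 < ((w * deriv Q w - ω * deriv Q ω) / (Q w - Q ω)).re := by
  have hω : ω ∈ 𝔻 := by rwa [mem_unitDisk, hn, ← mem_unitDisk]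
  have hw_supp := re_inv_pos (hQ.re_sub_div_pos_of_norm_eq hw hn hne)
  have hω_supp := re_inv_pos (hQ.re_sub_div_pos_of_norm_eq hω hn.symm hne.symm)
  rw [inv_div] at hw_supp hω_supp
  rw [sub_div, sub_eq_add_neg, ← div_neg, neg_sub, add_re]
  exact add_pos hw_supp hω_supp

lemma re_mul_deriv_sub_div_pos (hQ : IsConvexMap Q) {w ω : ℂ} (hw : w ∈ 𝔻) (hn : ‖ω‖ < ‖w‖) :
    0 < ((w * deriv Q w - ω * deriv Q ω) / (Q w - Q ω)).re := by
  set K : ℂ → ℂ := fun z => z * deriv Q z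
  set F : ℂ → ℂ := fun z => dslope K w z / dslope Q w z
  have hF : DifferentiableOn ℂ F 𝔻 :=
    ((differentiableOn_dslope (unitDisk_mem_nhds hw)).2
      (differentiableOn_id.mul hQ.differentiableOn_deriv)).div
    ((differentiableOn_dslope (unitDisk_mem_nhds hw)).2 hQ.differentiableOn)
      fun z hz => hQ.dslope_ne_zero hQ.injOn hw hz
  have hF_of_ne : ∀ z, z ≠ w → F z = (K w - K z) / (Q w - Q z) := fun z hzw => by
    simp only [F, dslope_of_ne _ hzw, slope_def_field]
    rw [div_div_div_cancel_right₀ (sub_ne_zero.2 hzw), ← neg_sub (K w), ← neg_sub (Q w),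
      neg_div_neg_eq]
  have hFw : F w = turningRate Q w := by
    simp only [F, dslope_same, K]
    rw [(hQ.hasDerivAt_mul_deriv hw).deriv, mul_div_cancel_right₀ _ (hQ.deriv_ne_zero w hw)]
  have hFw_pos : 0 < (F w).re := hFw ▸ hQ.re_turningRate_pos w hw
  have hnonneg : ∀ z, ‖z‖ = ‖w‖ → 0 ≤ (F z).re := fun z hz => by
    rcases eq_or_ne z w with rfl | hzw
    · exact hFw_pos.le
    · rw [hF_of_ne z hzw]
      exact (hQ.re_mul_deriv_sub_div_pos_of_norm_eq hw hz hzw).le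
  have hpos := re_pos_of_norm_eq (hF.mono (closedBall_subset_unitDisk (mem_unitDisk.1 hw)))
    hnonneg ⟨w, rfl, hFw_pos⟩ hn
  rwa [hF_of_ne ω (ne_of_apply_ne norm hn.ne)] at hpos

-- Dividing the excluded equation by `Q w - Q ω` expresses `-c` as a quotient of positive real
-- part plus `(k - 1)` times another one.
lemma mul_add_mul_deriv_ne (hQ : IsConvexMap Q) {c w ω : ℂ} (hc : 0 ≤ c.re) (hw : w ∈ 𝔻)
    (hn : ‖ω‖ < ‖w‖) {k : ℝ} (hk : 1 ≤ k) :
    c * Q ω + ω * deriv Q ω ≠ c * Q w + k * (w * deriv Q w) := by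
  intro heq
  have hsupp := hQ.re_sub_div_pos hw hn.le (ne_of_apply_ne norm hn.ne)
  have hchord := hQ.re_mul_deriv_sub_div_pos hw hn
  have hsub : Q w - Q ω ≠ 0 := fun h => by simp [h] at hsupp
  have hsum : (w * deriv Q w - ω * deriv Q ω) / (Q w - Q ω) +
      ((k - 1 : ℝ) : ℂ) * (w * deriv Q w / (Q w - Q ω)) = -c := by
    push_cast
    field_simp
    linear_combination -heq
  have hre := congrArg re hsum
  have hinv := re_inv_pos hsupp
  rw [inv_div] at hinv
  rw [add_re, re_ofReal_mul, neg_re] at hre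
  nlinarith [mul_nonneg (sub_nonneg.2 hk) hinv.le]

end IsConvexMap

/-! ### The Hallenbeck–Ruscheweyh subordination theorem -/

lemma hasDerivAt_invFunOn {𝕜 : Type*} [NontriviallyNormedField 𝕜] [CompleteSpace 𝕜] {Q : 𝕜 → 𝕜}
    {s : Set 𝕜} {Q' ζ : 𝕜} (hinj : InjOn Q s) (hs : s ∈ 𝓝 ζ) (hQ : HasStrictDerivAt Q Q' ζ)
    (hQ' : Q' ≠ 0) : HasDerivAt (Function.invFunOn Q s) Q'⁻¹ (Q ζ) :=
  (hQ.to_local_left_inverse hQ'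
    (eventually_of_mem hs fun _ hx => hinj.leftInvOn_invFunOn hx)).hasDerivAt

namespace IsLocallyUnivalent

variable {Q q : ℂ → ℂ}

lemma hasStrictDerivAt (hQ : IsLocallyUnivalent Q) {ζ : ℂ} (hζ : ζ ∈ 𝔻) :
    HasStrictDerivAt Q (deriv Q ζ) ζ :=
  (hQ.differentiableOn.analyticAt (unitDisk_mem_nhds hζ)).hasStrictDerivAt

lemma isOpen_image (hQ : IsLocallyUnivalent Q) {U : Set ℂ} (hU : IsOpen U) (hU𝔻 : U ⊆ 𝔻) :
    IsOpen (Q '' U) := by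
  refine isOpen_iff_mem_nhds.2 ?_
  rintro _ ⟨ζ, hζ, rfl⟩
  rw [← (hQ.hasStrictDerivAt (hU𝔻 hζ)).map_nhds_eq (hQ.deriv_ne_zero ζ (hU𝔻 hζ))]
  exact image_mem_map (hU.mem_nhds hζ)

lemma hasDerivAt_invFunOn_comp (hQ : IsLocallyUnivalent Q) (hinj : InjOn Q 𝔻) {z ζ : ℂ}
    (hq : DifferentiableAt ℂ q z) (hζ : ζ ∈ 𝔻) (hqζ : q z = Q ζ) :
    HasDerivAt (fun z => Function.invFunOn Q 𝔻 (q z)) ((deriv Q ζ)⁻¹ * deriv q z) z :=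
  (hasDerivAt_invFunOn hinj (unitDisk_mem_nhds hζ) (hQ.hasStrictDerivAt hζ)
    (hQ.deriv_ne_zero ζ hζ)).comp_of_eq z hq.hasDerivAt hqζ.symm

lemma subordinate_of_mapsTo (hQ : IsLocallyUnivalent Q) (hinj : InjOn Q 𝔻)
    (hq : DifferentiableOn ℂ q 𝔻) (h0 : q 0 = Q 0) (hmaps : MapsTo q 𝔻 (Q '' 𝔻)) :
    Subordinate q Q := by
  refine ⟨fun z => Function.invFunOn Q 𝔻 (q z), fun z hz => ?_, ?_,
    fun z hz => Function.invFunOn_mem (hmaps hz),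
    fun z hz => (Function.invFunOn_eq (hmaps hz)).symm⟩
  · obtain ⟨ζ, hζ, hqζ⟩ := hmaps hz
    exact (hQ.hasDerivAt_invFunOn_comp hinj (hq.differentiableAt (unitDisk_mem_nhds hz)) hζ
      hqζ.symm).differentiableAt.differentiableWithinAt
  · simp only [h0]
    exact hinj.leftInvOn_invFunOn zero_mem_unitDisk

lemma exists_mul_deriv_eq (hQ : IsLocallyUnivalent Q) (hinj : InjOn Q 𝔻)
    (hq : DifferentiableOn ℂ q 𝔻) (h0 : q 0 = Q 0) {z₀ w₀ : ℂ} (hz₀ : z₀ ∈ 𝔻) (hw₀ : w₀ ∈ 𝔻)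
    (hw₀' : w₀ ≠ 0) (hqw : q z₀ = Q w₀)
    (hmaps : MapsTo q (closedBall 0 ‖z₀‖) (Q '' closedBall 0 ‖w₀‖)) :
    ∃ k : ℝ, 1 ≤ k ∧ z₀ * deriv q z₀ = k * (w₀ * deriv Q w₀) := by
  set w : ℂ → ℂ := fun z => Function.invFunOn Q 𝔻 (q z)
  have hw_eq : ∀ {z ζ}, ζ ∈ 𝔻 → q z = Q ζ → w z = ζ := fun {z ζ} hζ hqζ => by
    simp only [w, hqζ, hinj.leftInvOn_invFunOn hζ]
  have hlift : ∀ z, ‖z‖ ≤ ‖z₀‖ → ∃ ζ ∈ 𝔻, ‖ζ‖ ≤ ‖w₀‖ ∧ q z = Q ζ := fun z hz => by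
    obtain ⟨ζ, hζ, hqζ⟩ := hmaps (mem_closedBall_zero_iff.2 hz)
    exact ⟨ζ, closedBall_subset_unitDisk (mem_unitDisk.1 hw₀) hζ, mem_closedBall_zero_iff.1 hζ,
      hqζ.symm⟩
  have hw_deriv : ∀ {z ζ}, z ∈ 𝔻 → ζ ∈ 𝔻 → q z = Q ζ →
      HasDerivAt w ((deriv Q ζ)⁻¹ * deriv q z) z := fun {z ζ} hz hζ hqζ =>
    hQ.hasDerivAt_invFunOn_comp hinj (hq.differentiableAt (unitDisk_mem_nhds hz)) hζ hqζ
  have hwz₀ : w z₀ = w₀ := hw_eq hw₀ hqw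
  have hwz₀_deriv := hw_deriv hz₀ hw₀ hqw
  have hw_diff : DifferentiableOn ℂ w (ball 0 ‖z₀‖) := fun z hz => by
    have hz' : ‖z‖ < ‖z₀‖ := mem_ball_zero_iff.1 hz
    obtain ⟨ζ, hζ, -, hqζ⟩ := hlift z hz'.le
    exact (hw_deriv (mem_unitDisk.2 (hz'.trans (mem_unitDisk.1 hz₀))) hζ
      hqζ).differentiableAt.differentiableWithinAt
  have hw_max : ∀ z, ‖z‖ ≤ ‖z₀‖ → ‖w z‖ ≤ ‖w z₀‖ := fun z hz => by
    obtain ⟨ζ, hζ, hζw, hqζ⟩ := hlift z hz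
    rwa [hw_eq hζ hqζ, hwz₀]
  obtain ⟨k, hk, hkw⟩ := jack hw_diff hwz₀_deriv.differentiableAt
    (hw_eq zero_mem_unitDisk h0) (hwz₀ ▸ hw₀') hw_max
  refine ⟨k, hk, ?_⟩
  rw [hwz₀_deriv.deriv, hwz₀] at hkw
  have := hQ.deriv_ne_zero w₀ hw₀
  field_simp at hkw
  linear_combination hkw

end IsLocallyUnivalent

namespace IsConvexMap

variable {Q q : ℂ → ℂ}

-- A first exit of `q` from `Q '' ball 0 ρ` at `z₀` would put `q z₀ = Q w₀` with `‖w₀‖ = ρ`, while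
-- `‖ω z₀‖ < ρ`, so the equation `hω` at `z₀` is the one excluded by `mul_add_mul_deriv_ne`.
lemma mapsTo_ball_image (hQ : IsConvexMap Q) {ω : ℂ → ℂ} {c : ℂ} {ρ : ℝ} (hc : 0 ≤ c.re)
    (hq : DifferentiableOn ℂ q 𝔻) (h0 : q 0 = Q 0) (hω_le : ∀ z ∈ 𝔻, ‖ω z‖ ≤ ‖z‖)
    (hω : ∀ z ∈ 𝔻, c * q z + z * deriv q z = c * Q (ω z) + ω z * deriv Q (ω z))
    (hρ : ρ < 1) : MapsTo q (ball 0 ρ) (Q '' ball 0 ρ) := by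
  rcases le_or_gt ρ 0 with hρ0 | hρ0
  · simp [ball_eq_empty.2 hρ0]
  have hball : ball (0 : ℂ) ρ ⊆ 𝔻 := ball_subset_ball hρ.le
  have hclosed : IsClosed (Q '' closedBall 0 ρ) :=
    ((isCompact_closedBall 0 ρ).image_of_continuousOn
      (hQ.differentiableOn.continuousOn.mono (closedBall_subset_unitDisk hρ))).isClosed
  refine mapsTo_ball_of_mapsTo_closure (hq.continuousOn.mono hball)
    (hQ.isOpen_image isOpen_ball hball) ⟨0, mem_ball_self hρ0, h0.symm⟩ fun z₀ hz₀ hmaps => ?_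
  replace hmaps := hmaps.mono_right (closure_minimal (image_mono ball_subset_closedBall) hclosed)
  obtain ⟨w₀, hw₀, hqw⟩ := hmaps (mem_closedBall_zero_iff.2 le_rfl)
  refine ⟨w₀, mem_ball_zero_iff.2 ((mem_closedBall_zero_iff.1 hw₀).lt_of_ne fun hw₀ρ => ?_), hqw⟩
  have hw₀𝔻 : w₀ ∈ 𝔻 := mem_unitDisk.2 (hw₀ρ.trans_lt hρ)
  subst hw₀ρ
  obtain ⟨k, hk, hkw⟩ := hQ.exists_mul_deriv_eq hQ.injOn hq h0 (hball hz₀) hw₀𝔻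
    (norm_pos_iff.1 hρ0) hqw.symm hmaps
  have hlt : ‖ω z₀‖ < ‖w₀‖ := (hω_le z₀ (hball hz₀)).trans_lt (mem_ball_zero_iff.1 hz₀)
  refine hQ.mul_add_mul_deriv_ne hc hw₀𝔻 hlt hk ?_
  rw [← hω z₀ (hball hz₀), hqw, hkw]

theorem subordinate_of_mul_add_mul_deriv (hQ : IsConvexMap Q) {c : ℂ} (hc : c ≠ 0)
    (hc_re : 0 ≤ c.re) (hq : DifferentiableOn ℂ q 𝔻)
    (hsub : Subordinate (fun z => c * q z + z * deriv q z) (fun z => c * Q z + z * deriv Q z)) :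
    Subordinate q Q := by
  obtain ⟨ω, hωd, hω0, hω𝔻, hω⟩ := hsub
  have h0 : q 0 = Q 0 := by simpa [hω0, hc] using hω 0 zero_mem_unitDisk
  have hω_le : ∀ z ∈ 𝔻, ‖ω z‖ ≤ ‖z‖ := fun z hz =>
    norm_le_norm_of_mapsTo_ball hωd (fun z hz => ball_subset_closedBall (hω𝔻 z hz)) hω0
      (mem_unitDisk.1 hz)
  refine hQ.subordinate_of_mapsTo hQ.injOn hq h0 fun z hz => ?_
  obtain ⟨ρ, hzρ, hρ⟩ := exists_between (mem_unitDisk.1 hz)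
  exact image_mono (ball_subset_ball hρ.le)
    (hQ.mapsTo_ball_image hc_re hq h0 hω_le hω hρ (mem_ball_zero_iff.2 hzρ))

end IsConvexMap

/-! ### Convexity of the averaged function -/

lemma re_one_add_div_one_sub (V : ℂ) :
    ((1 + V) / (1 - V)).re = (1 - ‖V‖ ^ 2) / ‖1 - V‖ ^ 2 := by
  rw [← normSq_eq_norm_sq, ← normSq_eq_norm_sq, div_re, ← add_div, normSq_apply V]
  congr 1
  simp only [add_re, one_re, sub_re, add_im, one_im, sub_im]
  ring

lemma re_one_add_div_one_sub_pos {V : ℂ} (hV : ‖V‖ < 1) : 0 < ((1 + V) / (1 - V)).re := by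
  have hV1 : 1 - V ≠ 0 := sub_ne_zero.2 (by rintro rfl; simp at hV)
  rw [re_one_add_div_one_sub]
  exact div_pos (sub_pos.2 (pow_lt_one₀ (norm_nonneg V) hV two_ne_zero)) (by positivity)

lemma re_div_one_sub_of_norm_eq_one {V : ℂ} (hV : ‖V‖ = 1) (hV1 : V ≠ 1) :
    (V / (1 - V)).re = -1 / 2 := by
  have hcayley : V / (1 - V) = (2⁻¹ : ℝ) * ((1 + V) / (1 - V) - 1) := by
    have := sub_ne_zero.2 hV1.symm
    push_cast
    field_simp
    ring
  rw [hcayley, re_ofReal_mul, sub_re, re_one_add_div_one_sub, hV]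
  norm_num

section Averaging

variable {h Q : ℂ → ℂ}

lemma deriv_eq_of_add_mul_deriv_eq (hQ : DifferentiableOn ℂ Q 𝔻)
    (hQh : ∀ z ∈ 𝔻, Q z + z * deriv Q z = h z) {z : ℂ} (hz : z ∈ 𝔻) :
    deriv h z = 2 * deriv Q z + z * deriv (deriv Q) z := by
  have hsum := (hQ.differentiableAt (unitDisk_mem_nhds hz)).hasDerivAt.add ((hasDerivAt_id z).mul
    ((hQ.deriv isOpen_unitDisk).differentiableAt (unitDisk_mem_nhds hz)).hasDerivAt)
  have heq : h =ᶠ[𝓝 z] Q + id * deriv Q := by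
    filter_upwards [unitDisk_mem_nhds hz] with x hx using (hQh x hx).symm
  rw [(hsum.congr_of_eventuallyEq heq).deriv]
  simp only [id]
  ring

/-- The function `W` for which `1 + z Q''/Q' = (1 + W) / (1 - W)` when `Q + z Q' = h`. Convexity of
`Q` means that it is a Schwarz function: `‖W‖ < 1` on the disk. -/
def schwarzFun (h Q : ℂ → ℂ) (z : ℂ) : ℂ := 1 - 2 * deriv Q z / deriv h z

lemma turningRate_eq_schwarzFun (hQ : DifferentiableOn ℂ Q 𝔻)
    (hQh : ∀ z ∈ 𝔻, Q z + z * deriv Q z = h z) {z : ℂ} (hz : z ∈ 𝔻) (hQz : deriv Q z ≠ 0)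
    (hhz : deriv h z ≠ 0) :
    turningRate Q z = (1 + schwarzFun h Q z) / (1 - schwarzFun h Q z) := by
  rw [turningRate, schwarzFun, sub_sub_cancel]
  field_simp
  linear_combination -2 * deriv_eq_of_add_mul_deriv_eq hQ hQh hz

namespace IsLocallyUnivalent

lemma hasDerivAt_schwarzFun (hh : IsLocallyUnivalent h) (hQ : DifferentiableOn ℂ Q 𝔻) {z : ℂ}
    (hz : z ∈ 𝔻) : HasDerivAt (schwarzFun h Q)
      (-((2 * deriv (deriv Q) z * deriv h z - 2 * deriv Q z * deriv (deriv h) z) /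
        deriv h z ^ 2)) z :=
  ((((hQ.deriv isOpen_unitDisk).differentiableAt (unitDisk_mem_nhds hz)).hasDerivAt.const_mul
    2).div (hh.differentiableOn_deriv.differentiableAt (unitDisk_mem_nhds hz)).hasDerivAt
      (hh.deriv_ne_zero z hz)).const_sub 1

lemma differentiableOn_schwarzFun (hh : IsLocallyUnivalent h) (hQ : DifferentiableOn ℂ Q 𝔻) :
    DifferentiableOn ℂ (schwarzFun h Q) 𝔻 := fun _ hz =>
  (hh.hasDerivAt_schwarzFun hQ hz).differentiableAt.differentiableWithinAt

lemma schwarzFun_zero (hh : IsLocallyUnivalent h) (hQ : DifferentiableOn ℂ Q 𝔻)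
    (hQh : ∀ z ∈ 𝔻, Q z + z * deriv Q z = h z) : schwarzFun h Q 0 = 0 := by
  have hderiv := deriv_eq_of_add_mul_deriv_eq hQ hQh zero_mem_unitDisk
  rw [zero_mul, add_zero] at hderiv
  rw [schwarzFun, ← hderiv, div_self (hh.deriv_ne_zero 0 zero_mem_unitDisk), sub_self]

lemma mul_deriv_schwarzFun (hh : IsLocallyUnivalent h) (hQ : DifferentiableOn ℂ Q 𝔻)
    (hQh : ∀ z ∈ 𝔻, Q z + z * deriv Q z = h z) {z : ℂ} (hz : z ∈ 𝔻) :
    z * deriv (schwarzFun h Q) z =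
      (1 - schwarzFun h Q z) * turningRate h z - (1 + schwarzFun h Q z) := by
  have := hh.deriv_ne_zero z hz
  rw [(hh.hasDerivAt_schwarzFun hQ hz).deriv, turningRate, schwarzFun]
  field_simp
  linear_combination (2 * deriv h z) * deriv_eq_of_add_mul_deriv_eq hQ hQh hz

-- Where `|W| = 1` and `z W' = k W`, one would have `Re (1 + z h''/h') = -k/2 ≤ -1/2`.
lemma norm_schwarzFun_lt_one (hh : IsLocallyUnivalent h)
    (hre : ∀ z ∈ 𝔻, -1 / 2 < (turningRate h z).re) (hQ : DifferentiableOn ℂ Q 𝔻)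
    (hQh : ∀ z ∈ 𝔻, Q z + z * deriv Q z = h z) {z : ℂ} (hz : z ∈ 𝔻) :
    ‖schwarzFun h Q z‖ < 1 := by
  refine norm_lt_one_of_mul_deriv_ne (hh.differentiableOn_schwarzFun hQ)
    (hh.schwarzFun_zero hQ hQh) (fun z hz hWz k hk hkW => ?_) hz
  rw [hh.mul_deriv_schwarzFun hQ hQh hz] at hkW
  set W := schwarzFun h Q z
  have hW1 : W ≠ 1 := fun hW1 => by
    have hkW_re := congrArg re hkW
    norm_num [hW1] at hkW_re
    linarith
  have hrate : turningRate h z = (1 + W) / (1 - W) + k * (W / (1 - W)) := by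
    have := sub_ne_zero.2 hW1.symm
    field_simp
    linear_combination hkW
  have hre_rate : (turningRate h z).re = -k / 2 := by
    rw [hrate, add_re, re_ofReal_mul, re_one_add_div_one_sub,
      re_div_one_sub_of_norm_eq_one hWz hW1, hWz]
    ring
  linarith [hre z hz]

end IsLocallyUnivalent

lemma IsConvexMap.of_add_mul_deriv_eq (hh : IsLocallyUnivalent h)
    (hre : ∀ z ∈ 𝔻, -1 / 2 < (turningRate h z).re) (hQ : DifferentiableOn ℂ Q 𝔻)
    (hQh : ∀ z ∈ 𝔻, Q z + z * deriv Q z = h z) : IsConvexMap Q := by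
  have hW := fun z => hh.norm_schwarzFun_lt_one hre hQ hQh (z := z)
  have hQ' : ∀ z ∈ 𝔻, deriv Q z ≠ 0 := fun z hz hQz => by simpa [schwarzFun, hQz] using hW z hz
  refine ⟨⟨hQ, hQ'⟩, fun z hz => ?_⟩
  rw [turningRate_eq_schwarzFun hQ hQh hz (hQ' z hz) (hh.deriv_ne_zero z hz)]
  exact re_one_add_div_one_sub_pos (hW z hz)

end Averaging

/-- The average `z⁻¹ ∫₀^z h(t) dt` of `h` over the segment `[0, z]`. The substitution `t = s z`
also gives it the value `h 0` at `z = 0`. -/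
def radialAverage (h : ℂ → ℂ) (z : ℂ) : ℂ := ∫ s in (0 : ℝ)..1, h (s * z)

lemma add_mul_deriv_eq_of_hasDerivAt {q : ℂ → ℂ} {d z : ℂ} (hq : DifferentiableAt ℂ q z)
    (hd : HasDerivAt (fun z => z * q z) d z) : q z + z * deriv q z = d := by
  simpa using ((hasDerivAt_id z).mul hq.hasDerivAt).unique hd

lemma mul_radialAverage {h H : ℂ → ℂ} (hh : ContinuousOn h 𝔻)
    (hH : ∀ z ∈ 𝔻, HasDerivAt H (h z) z) {z : ℂ} (hz : z ∈ 𝔻) :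
    z * radialAverage h z = H z - H 0 := by
  have hmem : ∀ s ∈ uIcc (0 : ℝ) 1, (s : ℂ) * z ∈ 𝔻 := fun s hs =>
    ofReal_mul_mem_unitDisk hz (uIcc_of_le (zero_le_one' ℝ) ▸ hs)
  have hcont : ContinuousOn (fun s : ℝ => h (s * z) * z) (uIcc 0 1) :=
    (hh.comp (by fun_prop) hmem).mul continuousOn_const
  have hftc := intervalIntegral.integral_eq_sub_of_hasDerivAt
    (fun s hs => hasDerivAt_comp_ofReal_mul (hH _ (hmem s hs))) hcont.intervalIntegrable
  simpa [radialAverage, mul_comm z] using hftc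

lemma eqOn_radialAverage_dslope {h H : ℂ → ℂ} (hh : ContinuousOn h 𝔻)
    (hH : ∀ z ∈ 𝔻, HasDerivAt H (h z) z) : EqOn (radialAverage h) (dslope H 0) 𝔻 := by
  intro z hz
  rcases eq_or_ne z 0 with rfl | hz0
  · rw [dslope_same, (hH 0 hz).deriv]
    simp [radialAverage]
  · rw [dslope_of_ne _ hz0, slope_def_field, sub_zero, eq_div_iff hz0, mul_comm,
      mul_radialAverage hh hH hz]

lemma differentiableOn_radialAverage {h : ℂ → ℂ} (hh : DifferentiableOn ℂ h 𝔻) :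
    DifferentiableOn ℂ (radialAverage h) 𝔻 := by
  obtain ⟨H, hH⟩ := hh.isExactOn_ball
  have hHd : DifferentiableOn ℂ H 𝔻 := fun z hz => (hH z hz).differentiableAt.differentiableWithinAt
  exact ((differentiableOn_dslope (unitDisk_mem_nhds zero_mem_unitDisk)).2 hHd).congr
    (eqOn_radialAverage_dslope hh.continuousOn hH)

lemma radialAverage_add_mul_deriv {h : ℂ → ℂ} (hh : DifferentiableOn ℂ h 𝔻) {z : ℂ}
    (hz : z ∈ 𝔻) : radialAverage h z + z * deriv (radialAverage h) z = h z := by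
  obtain ⟨H, hH⟩ := hh.isExactOn_ball
  refine add_mul_deriv_eq_of_hasDerivAt
    ((differentiableOn_radialAverage hh).differentiableAt (unitDisk_mem_nhds hz)) ?_
  refine ((hH z hz).sub_const (H 0)).congr_of_eventuallyEq ?_
  filter_upwards [unitDisk_mem_nhds hz] with x hx using mul_radialAverage hh.continuousOn hH hx

lemma IsLocallyUnivalent.isConvexMap_radialAverage {h : ℂ → ℂ} (hh : IsLocallyUnivalent h)
    (hre : ∀ z ∈ 𝔻, -1 / 2 < (turningRate h z).re) : IsConvexMap (radialAverage h) :=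
  .of_add_mul_deriv_eq hh hre (differentiableOn_radialAverage hh.differentiableOn)
    fun _ => radialAverage_add_mul_deriv hh.differentiableOn

/-! ### Starlikeness -/

lemma Subordinate.trans {p q r : ℂ → ℂ} (hpq : Subordinate p q) (hqr : Subordinate q r) :
    Subordinate p r := by
  obtain ⟨ω, hωd, hω0, hω𝔻, hω⟩ := hpq
  obtain ⟨η, hηd, hη0, hη𝔻, hη⟩ := hqr
  exact ⟨η ∘ ω, hηd.comp hωd hω𝔻, by simp [hω0, hη0], fun z hz => hη𝔻 _ (hω𝔻 z hz),
    fun z hz => (hω z hz).trans (hη _ (hω𝔻 z hz))⟩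

/-- The quantity `1 - f(z) / (z f'(z))` for `f 0 = 0`, with `f(z) / z` extended analytically to the
origin by `dslope`. If `z f'(z) / f(z)` has the value `ψ`, this has the value `(ψ - 1) / ψ`. -/
def starlikeDefect (f : ℂ → ℂ) (z : ℂ) : ℂ := 1 - dslope f 0 z / deriv f z

lemma mul_dslope_zero {f : ℂ → ℂ} (hf0 : f 0 = 0) (z : ℂ) : z * dslope f 0 z = f z := by
  simpa [hf0] using sub_smul_dslope f 0 z

namespace IsLocallyUnivalent

variable {f : ℂ → ℂ}

lemma differentiableOn_starlikeDefect (hf : IsLocallyUnivalent f) :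
    DifferentiableOn ℂ (starlikeDefect f) 𝔻 :=
  (((differentiableOn_dslope (unitDisk_mem_nhds zero_mem_unitDisk)).2 hf.differentiableOn).div
    hf.differentiableOn_deriv hf.deriv_ne_zero).const_sub 1

lemma starlikeDefect_add_mul_deriv (hf : IsLocallyUnivalent f) (hf0 : f 0 = 0) {z : ℂ}
    (hz : z ∈ 𝔻) : starlikeDefect f z + z * deriv (starlikeDefect f) z =
      f z * deriv (deriv f) z / deriv f z ^ 2 := by
  have hfz := hf.deriv_ne_zero z hz
  have hmul : (fun x => x * starlikeDefect f x) = fun x => x - f x / deriv f x := by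
    funext x
    rw [starlikeDefect, mul_sub, mul_one, ← mul_div_assoc, mul_dslope_zero hf0]
  refine add_mul_deriv_eq_of_hasDerivAt
    (hf.differentiableOn_starlikeDefect.differentiableAt (unitDisk_mem_nhds hz)) ?_
  rw [hmul]
  refine ((hasDerivAt_id z).sub
    ((hf.differentiableOn.differentiableAt (unitDisk_mem_nhds hz)).hasDerivAt.div
      (hf.differentiableOn_deriv.differentiableAt (unitDisk_mem_nhds hz)).hasDerivAt
      hfz)).congr_deriv ?_
  field_simp
  ring

end IsLocallyUnivalent

lemma StarlikeMM.of_subordinate_starlikeDefect {ψ f : ℂ → ℂ} (hψ : ∀ z ∈ 𝔻, ψ z ≠ 0)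
    (hf : IsClassA f) (hf' : ∀ z ∈ 𝔻, deriv f z ≠ 0)
    (hsub : Subordinate (starlikeDefect f) fun z => (ψ z - 1) / ψ z) : StarlikeMM ψ f := by
  obtain ⟨ω, hωd, hω0, hω𝔻, hω⟩ := hsub
  have hfactor : ∀ z ∈ 𝔻, deriv f z = dslope f 0 z * ψ (ω z) := fun z hz => by
    have hz' := hf' z hz
    have hψz := hψ _ (hω𝔻 z hz)
    have heq := hω z hz
    rw [starlikeDefect] at heq
    field_simp at heq
    linear_combination heq
  have hdslope : ∀ z ∈ 𝔻, dslope f 0 z ≠ 0 := fun z hz h =>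
    hf' z hz (by rw [hfactor z hz, h, zero_mul])
  refine ⟨hf, fun z hz hz0 => ?_, ω, hωd, hω0, hω𝔻, fun z hz => ?_⟩
  · rw [← mul_dslope_zero hf.2.1 z]
    exact mul_ne_zero hz0 (hdslope z hz)
  have hψω : deriv f z / dslope f 0 z = ψ (ω z) := by
    rw [hfactor z hz, mul_div_cancel_left₀ _ (hdslope z hz)]
  rw [← hψω]
  dsimp only
  split_ifs with hz0
  · rw [hz0, dslope_same, div_self (hf' 0 zero_mem_unitDisk)]
  · rw [← mul_dslope_zero hf.2.1 z, mul_div_mul_left _ _ hz0]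

theorem stmt0_general (ψ h f : ℂ → ℂ) (hψ : ∀ z ∈ 𝔻, ψ z ≠ 0)
    (hhd : DifferentiableOn ℂ h 𝔻) (hh0' : deriv h 0 ≠ 0)
    (hre : ∀ z ∈ 𝔻, -1 / 2 < (1 + z * deriv (deriv h) z / deriv h z).re)
    (hsub : Subordinate (fun z => ∫ s in (0 : ℝ)..1, h (s * z))
      (fun z => (ψ z - 1) / ψ z))
    (hf : IsClassA f) (hf' : ∀ z ∈ 𝔻, deriv f z ≠ 0)
    (hfh : Subordinate (fun z => f z * deriv (deriv f) z / deriv f z ^ 2) h) :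
    StarlikeMM ψ f := by
  have hh : IsLocallyUnivalent h := by
    refine ⟨hhd, fun z => ne_zero_of_le_re_mul_deriv_div (n := 2) (hhd.deriv isOpen_unitDisk) hh0'
      fun z hz => ?_⟩
    have hre_z := hre z hz
    rw [add_re, one_re] at hre_z
    push_cast
    linarith
  have hf_loc : IsLocallyUnivalent f := ⟨hf.1, hf'⟩
  have hdiff : Subordinate (fun z => 1 * starlikeDefect f z + z * deriv (starlikeDefect f) z)
      (fun z => 1 * radialAverage h z + z * deriv (radialAverage h) z) := by
    obtain ⟨ω, hωd, hω0, hω𝔻, hω⟩ := hfh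
    refine ⟨ω, hωd, hω0, hω𝔻, fun z hz => ?_⟩
    simp only [one_mul]
    rw [hf_loc.starlikeDefect_add_mul_deriv hf.2.1 hz, radialAverage_add_mul_deriv hhd (hω𝔻 z hz)]
    exact hω z hz
  have hdefect : Subordinate (starlikeDefect f) (radialAverage h) :=
    (hh.isConvexMap_radialAverage hre).subordinate_of_mul_add_mul_deriv one_ne_zero
      (by simp) hf_loc.differentiableOn_starlikeDefect hdiff
  exact .of_subordinate_starlikeDefect hψ hf hf' (hdefect.trans hsub)

theorem stmt0 (ψ h f : ℂ → ℂ)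
    (hψ : MaMinda ψ)
    (hhd : DifferentiableOn ℂ h 𝔻) (hh0 : h 0 = 0) (hh0' : deriv h 0 ≠ 0)
    (hre : ∀ z ∈ 𝔻, (-1/2 : ℝ) < (1 + z * deriv (deriv h) z / deriv h z).re)
    (hsub : Subordinate (fun z => ∫ s in (0:ℝ)..1, h ((s : ℂ) * z))
      (fun z => (ψ z - 1) / ψ z))
    (hf : IsClassA f)
    (hf0 : ∀ z ∈ 𝔻, z ≠ 0 → f z ≠ 0)
    (hf' : ∀ z ∈ 𝔻, deriv f z ≠ 0)
    (hfh : Subordinate (fun z => f z * deriv (deriv f) z / (deriv f z) ^ 2) h) :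
    StarlikeMM ψ f :=
  stmt0_general ψ h f (fun z hz => ne_zero_of_re_pos (hψ.2.2.1 z hz)) hhd hh0' hre hsub hf hf' hfh
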